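/- The Ehrhard half-space rearrangement is an isoperimetric rearrangement for the standard Gaussian measure and cost ‖x−y‖: for every Borel A ⊆ ℝⁿ and ε > 0, γ(A_ε) ≥ γ((A*)_ε), where A* = {x : x₁ < Φ^{-1}(γ(A))}, A_ε = {x : ∃ y ∈ A, ‖x−y‖ < ε}, and γ is the standard Gaussian measure. -/

import Mathlib

open Set MeasureTheory

/-- The standard Gaussian measure on `ℝⁿ`. -/
noncomputable def stdGaussian (n : ℕ) : Measure (EuclideanSpace ℝ (Fin n)) :=
  volume.withDensity
    (fun x => ENNReal.ofReal ((2 * Real.pi) ^ (-(n : ℝ) / 2) * Real.exp (-‖x‖ ^ 2 / 2)))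

/-- The standard Gaussian cumulative distribution function. -/
noncomputable def gaussCDF (t : ℝ) : ℝ :=
  ∫ s in Set.Iio t, Real.exp (-s ^ 2 / 2) / Real.sqrt (2 * Real.pi)

/-- The metric `ε`-enlargement. -/
def enlarge {n : ℕ} (A : Set (EuclideanSpace ℝ (Fin n))) (ε : ℝ) :
    Set (EuclideanSpace ℝ (Fin n)) :=
  {x | ∃ y ∈ A, ‖x - y‖ < ε}

namespace GIso
open Filter Topology

/-- one-dimensional Gaussian density -/
noncomputable def phi (s : ℝ) : ℝ := Real.exp (-s ^ 2 / 2) / Real.sqrt (2 * Real.pi)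

lemma sqrt_two_pi_pos : 0 < Real.sqrt (2 * Real.pi) := by positivity

lemma phi_pos (s : ℝ) : 0 < phi s := by unfold phi; positivity

lemma phi_cont : Continuous phi := by unfold phi; fun_prop

lemma phi_eq_pdf : phi = ProbabilityTheory.gaussianPDFReal 0 1 := by
  ext s
  simp [phi, ProbabilityTheory.gaussianPDFReal]
  ring

lemma phi_integrable : Integrable phi := by
  rw [phi_eq_pdf]; exact ProbabilityTheory.integrable_gaussianPDFReal 0 1

lemma cdf_eq (t : ℝ) : gaussCDF t = (ProbabilityTheory.gaussianReal 0 1).real (Iio t) := by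
  rw [measureReal_def, ProbabilityTheory.gaussianReal_apply_eq_integral _ one_ne_zero,
    ENNReal.toReal_ofReal, ← phi_eq_pdf]
  · rfl
  · exact integral_nonneg fun x => ProbabilityTheory.gaussianPDFReal_nonneg _ _ _

lemma cdf_sub (a b : ℝ) : gaussCDF b - gaussCDF a = ∫ s in a..b, phi s := by
  have := intervalIntegral.integral_Iic_sub_Iic (f := phi) (μ := volume) (a := a) (b := b)
    phi_integrable.integrableOn phi_integrable.integrableOn
  rw [← this, integral_Iic_eq_integral_Iio, integral_Iic_eq_integral_Iio]
  rfl

lemma cdf_hasDeriv (t : ℝ) : HasDerivAt gaussCDF (phi t) t := by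
  have h : gaussCDF = fun u => gaussCDF 0 + ∫ s in (0:ℝ)..u, phi s := by
    ext u; rw [← cdf_sub]; ring
  rw [h]
  exact (intervalIntegral.integral_hasDerivAt_right (phi_cont.intervalIntegrable _ _)
    (phi_cont.stronglyMeasurableAtFilter _ _) phi_cont.continuousAt).const_add _

lemma cdf_strictMono : StrictMono gaussCDF :=
  strictMono_of_deriv_pos fun t => by rw [(cdf_hasDeriv t).deriv]; exact phi_pos t

lemma cdf_cont : Continuous gaussCDF :=
  continuous_iff_continuousAt.2 fun t => (cdf_hasDeriv t).continuousAt

instance : NullSingletonClass (ProbabilityTheory.gaussianReal 0 1) :=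
  ProbabilityTheory.nullSingletonClass_gaussianReal one_ne_zero

lemma cdf_tendsto_top : Tendsto gaussCDF atTop (𝓝 1) := by
  have h := ProbabilityTheory.tendsto_cdf_atTop (ProbabilityTheory.gaussianReal 0 1)
  refine h.congr fun t => ?_
  rw [ProbabilityTheory.cdf_eq_real, cdf_eq, measureReal_def, measureReal_def,
    measure_congr (Iio_ae_eq_Iic (μ := ProbabilityTheory.gaussianReal 0 1))]

lemma cdf_tendsto_bot : Tendsto gaussCDF atBot (𝓝 0) := by
  have h := ProbabilityTheory.tendsto_cdf_atBot (ProbabilityTheory.gaussianReal 0 1)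
  refine h.congr fun t => ?_
  rw [ProbabilityTheory.cdf_eq_real, cdf_eq, measureReal_def, measureReal_def,
    measure_congr (Iio_ae_eq_Iic (μ := ProbabilityTheory.gaussianReal 0 1))]

lemma cdf_pos (t : ℝ) : 0 < gaussCDF t := by
  have h : 0 ≤ gaussCDF (t - 1) := by rw [cdf_eq]; exact measureReal_nonneg
  exact h.trans_lt (cdf_strictMono (by linarith))

lemma cdf_lt_one (t : ℝ) : gaussCDF t < 1 := by
  have h : gaussCDF (t + 1) ≤ 1 := by rw [cdf_eq]; exact measureReal_le_one
  exact (cdf_strictMono (by linarith)).trans_le h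

lemma cdf_neg (t : ℝ) : gaussCDF (-t) = 1 - gaussCDF t := by
  have h : ∀ u, gaussCDF (-u) + gaussCDF u = gaussCDF (-0) + gaussCDF 0 := by
    have hd : ∀ u, HasDerivAt (fun u => gaussCDF (-u) + gaussCDF u) 0 u := fun u => by
      have h1 := (cdf_hasDeriv (-u)).comp u (hasDerivAt_neg u)
      have h2 := h1.add (cdf_hasDeriv u)
      have e : phi (-u) * -1 + phi u = 0 := by simp [phi]
      rw [e] at h2
      exact h2
    intro u
    exact is_const_of_deriv_eq_zero (fun u => (hd u).differentiableAt) (fun u => (hd u).deriv) u 0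
  have h1 : Tendsto (fun u => gaussCDF (-u) + gaussCDF u) atTop (𝓝 (0 + 1)) :=
    (cdf_tendsto_bot.comp tendsto_neg_atTop_atBot).add cdf_tendsto_top
  have h2 : Tendsto (fun u => gaussCDF (-u) + gaussCDF u) atTop (𝓝 (gaussCDF (-0) + gaussCDF 0)) :=
    tendsto_const_nhds.congr fun u => (h u).symm
  have h3 := tendsto_nhds_unique h1 h2
  have := h t
  linarith

/-- Gaussian quantile function -/
noncomputable def qf (p : ℝ) : ℝ := Function.invFun gaussCDF p

lemma qf_cdf (t : ℝ) : qf (gaussCDF t) = t :=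
  Function.leftInverse_invFun cdf_strictMono.injective t

lemma cdf_qf {p : ℝ} (hp : p ∈ Ioo (0:ℝ) 1) : gaussCDF (qf p) = p := by
  apply Function.invFun_eq
  obtain ⟨a, ha⟩ := ((cdf_tendsto_bot.eventually (gt_mem_nhds hp.1))).exists
  obtain ⟨b, hb⟩ := ((cdf_tendsto_top.eventually (lt_mem_nhds hp.2))).exists
  exact mem_range_of_exists_le_of_exists_ge cdf_cont ⟨a, ha.le⟩ ⟨b, hb.le⟩

lemma cdf_mem (t : ℝ) : gaussCDF t ∈ Ioo (0:ℝ) 1 := ⟨cdf_pos t, cdf_lt_one t⟩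

lemma qf_lt {p q : ℝ} (hp : p ∈ Ioo (0:ℝ) 1) (hq : q ∈ Ioo (0:ℝ) 1) (h : p < q) : qf p < qf q := by
  rw [← cdf_strictMono.lt_iff_lt, cdf_qf hp, cdf_qf hq]; exact h

lemma qf_le {p q : ℝ} (hp : p ∈ Ioo (0:ℝ) 1) (hq : q ∈ Ioo (0:ℝ) 1) (h : p ≤ q) : qf p ≤ qf q := by
  rw [← cdf_strictMono.le_iff_le, cdf_qf hp, cdf_qf hq]; exact h

lemma qf_contAt {p : ℝ} (hp : p ∈ Ioo (0:ℝ) 1) : ContinuousAt qf p := by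
  have hs : StrictMonoOn qf (Ioo (0:ℝ) 1) := fun a ha b hb h => qf_lt ha hb h
  refine hs.continuousAt_of_image_mem_nhds (Ioo_mem_nhds hp.1 hp.2) ?_
  have : qf '' Ioo (0:ℝ) 1 = univ := eq_univ_of_forall fun t => ⟨_, cdf_mem t, qf_cdf t⟩
  rw [this]; exact univ_mem

lemma qf_hasDeriv {p : ℝ} (hp : p ∈ Ioo (0:ℝ) 1) : HasDerivAt qf (phi (qf p))⁻¹ p := by
  refine HasDerivAt.of_local_left_inverse (qf_contAt hp) (cdf_hasDeriv _) (phi_pos _).ne' ?_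
  filter_upwards [Ioo_mem_nhds hp.1 hp.2] with y hy using cdf_qf hy

lemma qf_one_sub {p : ℝ} (hp : p ∈ Ioo (0:ℝ) 1) : qf (1 - p) = - qf p := by
  have : 1 - p = gaussCDF (- qf p) := by rw [cdf_neg, cdf_qf hp]
  rw [this, qf_cdf]

lemma phi_hasDeriv (x : ℝ) : HasDerivAt phi (-x * phi x) x := by
  unfold phi
  have h1 : HasDerivAt (fun s : ℝ => -s ^ 2 / 2) (-x) x := by
    have := ((hasDerivAt_pow 2 x).neg).div_const 2
    refine HasDerivAt.congr_deriv this ?_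
    simp; ring
  refine HasDerivAt.congr_deriv ((h1.exp).div_const (Real.sqrt (2 * Real.pi))) ?_
  ring

/-- Gaussian isoperimetric profile -/
noncomputable def prof (p : ℝ) : ℝ := phi (qf p)

lemma prof_pos (p : ℝ) : 0 < prof p := phi_pos _

lemma prof_hasDeriv {p : ℝ} (hp : p ∈ Ioo (0:ℝ) 1) : HasDerivAt prof (- qf p) p := by
  have := (phi_hasDeriv (qf p)).comp p (qf_hasDeriv hp)
  refine HasDerivAt.congr_deriv this ?_
  have := (phi_pos (qf p)).ne'
  field_simp

lemma phi_le_one (x : ℝ) : phi x ≤ 1 := by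
  unfold phi
  rw [div_le_one sqrt_two_pi_pos]
  have h1 : Real.exp (-x ^ 2 / 2) ≤ 1 := Real.exp_le_one_iff.2 (by nlinarith [sq_nonneg x])
  have h2 : 1 ≤ Real.sqrt (2 * Real.pi) := Real.one_le_sqrt.2 (by nlinarith [Real.pi_gt_three])
  linarith

lemma phi_le_of_sq {x y : ℝ} (h : x ^ 2 ≤ y ^ 2) : phi y ≤ phi x := by
  unfold phi
  gcongr

lemma ratio_mono : Monotone (fun x => x * (phi x)⁻¹) := by
  apply monotone_of_deriv_nonneg
  · intro x
    exact ((hasDerivAt_id x).mul ((phi_hasDeriv x).inv (phi_pos x).ne')).differentiableAt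
  · intro x
    have hd : HasDerivAt (fun x => x * (phi x)⁻¹) _ x :=
      (hasDerivAt_id x).mul ((phi_hasDeriv x).inv (phi_pos x).ne')
    rw [hd.deriv]
    have := phi_pos x
    have e : 1 * (phi x)⁻¹ + id x * (-(-x * phi x) / phi x ^ 2) = (1 + x ^ 2) * (phi x)⁻¹ := by
      simp only [id]; field_simp
    have h3 : 0 ≤ (1 + x ^ 2) * (phi x)⁻¹ := by positivity
    convert h3 using 1

lemma le_of_deriv {g g' : ℝ → ℝ} {x : ℝ} (hx : 0 ≤ x)
    (hg : ∀ s ∈ Icc 0 x, HasDerivAt g (g' s) s) (h0 : ∀ s ∈ Icc 0 x, 0 ≤ g' s) : g 0 ≤ g x := by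
  have hm : MonotoneOn g (Icc 0 x) := by
    apply monotoneOn_of_deriv_nonneg (convex_Icc 0 x)
    · exact fun s hs => (hg s hs).continuousAt.continuousWithinAt
    · exact fun s hs => (hg s (interior_subset hs)).differentiableAt.differentiableWithinAt
    · intro s hs
      rw [(hg s (interior_subset hs)).deriv]; exact h0 s (interior_subset hs)
  exact hm (left_mem_Icc.2 hx) (right_mem_Icc.2 hx) hx

lemma sqrt_step {I u w : ℝ} (hI : 0 < I) (hu : 0 ≤ u) (hw : 0 ≤ w)
    (h : (u - w) ^ 2 ≤ 8 * I ^ 2 * (u + w - 2 * I ^ 2)) : 2 * I ≤ √u + √w := by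
  by_contra! hc
  have ha := Real.sqrt_nonneg u
  have hb := Real.sqrt_nonneg w
  have hu2 := Real.sq_sqrt hu
  have hw2 := Real.sq_sqrt hw
  generalize √u = α at *
  generalize √w = β at *
  subst hu2 hw2
  have h1 : ((α + β) ^ 2 - 4 * I ^ 2) * (α - β) ^ 2 ≤ 4 * I ^ 2 * ((α + β) ^ 2 - 4 * I ^ 2) := by
    nlinarith
  have h2 : (α + β) ^ 2 - 4 * I ^ 2 < 0 := by nlinarith
  have h3 : (α - β) ^ 2 < 4 * I ^ 2 := by nlinarith
  nlinarith

lemma two_point_aux {c x : ℝ} (hc2 : c ≤ 1 / 2) (hx : 0 ≤ x) (h0 : 0 < c - x) :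
    2 * prof c ≤ √(prof (c + x) ^ 2 + x ^ 2) + √(prof (c - x) ^ 2 + x ^ 2) := by
  have hm1 : ∀ s ∈ Icc 0 x, c + s ∈ Ioo (0:ℝ) 1 := fun s hs => by
    obtain ⟨h1, h2⟩ := hs; constructor <;> linarith
  have hm2 : ∀ s ∈ Icc 0 x, c - s ∈ Ioo (0:ℝ) 1 := fun s hs => by
    obtain ⟨h1, h2⟩ := hs; constructor <;> linarith
  have hxx : x ∈ Icc 0 x := right_mem_Icc.2 hx
  have hc : c ∈ Ioo (0:ℝ) 1 := by constructor <;> linarith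
  have hsub : ∀ s ∈ Icc 0 x, ∀ r ∈ Icc 0 s, r ∈ Icc 0 x := fun s hs r hr => ⟨hr.1, hr.2.trans hs.2⟩
  have dp : ∀ s : ℝ, HasDerivAt (fun s => c + s) 1 s := fun s => by
    simpa using (hasDerivAt_id s).const_add c
  have dm : ∀ s : ℝ, HasDerivAt (fun s => c - s) (-1) s := fun s => by
    simpa using (hasDerivAt_id s).const_sub c
  -- comparison of squares of quantiles
  have hq : ∀ s ∈ Icc 0 x, qf (c + s) ^ 2 ≤ qf (c - s) ^ 2 := fun s hs => by
    have a1 : qf (c - s) ≤ qf (c + s) := qf_le (hm2 s hs) (hm1 s hs) (by linarith [hs.1])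
    have a2 : qf (c + s) ≤ - qf (c - s) := by
      rw [← qf_one_sub (hm2 s hs)]
      have := hm2 s hs
      exact qf_le (hm1 s hs) ⟨by linarith [this.2], by linarith [this.1]⟩ (by linarith)
    nlinarith
  -- derivatives
  have dq1 : ∀ s ∈ Icc 0 x, HasDerivAt (fun s => qf (c + s)) (prof (c + s))⁻¹ s := fun s hs => by
    have := (qf_hasDeriv (hm1 s hs)).comp s (dp s)
    rw [mul_one] at this; exact this
  have dq2 : ∀ s ∈ Icc 0 x, HasDerivAt (fun s => qf (c - s)) (-(prof (c - s))⁻¹) s := fun s hs => by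
    have := (qf_hasDeriv (hm2 s hs)).comp s (dm s)
    rw [mul_neg_one] at this; exact this
  have dI1 : ∀ s ∈ Icc 0 x, HasDerivAt (fun s => prof (c + s)) (-qf (c + s)) s := fun s hs => by
    have := (prof_hasDeriv (hm1 s hs)).comp s (dp s)
    rw [mul_one] at this; exact this
  have dI2 : ∀ s ∈ Icc 0 x, HasDerivAt (fun s => prof (c - s)) (qf (c - s)) s := fun s hs => by
    have := (prof_hasDeriv (hm2 s hs)).comp s (dm s)
    rw [mul_neg_one, neg_neg] at this; exact this
  have hconv : ∀ s ∈ Icc 0 x, 2 * qf c ^ 2 ≤ qf (c + s) ^ 2 + qf (c - s) ^ 2 := fun s hs => by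
    have := le_of_deriv (g := fun s => qf (c + s) ^ 2 + qf (c - s) ^ 2)
      (g' := fun s => 2 * (qf (c + s) * (prof (c + s))⁻¹) - 2 * (qf (c - s) * (prof (c - s))⁻¹))
      hs.1 (fun r hr => by
        have := ((dq1 r (hsub s hs r hr)).pow 2).add ((dq2 r (hsub s hs r hr)).pow 2)
        refine HasDerivAt.congr_deriv this ?_
        simp; ring) (fun r hr => by
        have := ratio_mono (qf_le (hm2 r (hsub s hs r hr)) (hm1 r (hsub s hs r hr))
          (by linarith [hr.1]))
        simp only [prof] at this ⊢
        linarith)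
    simp only [add_zero, sub_zero] at this
    linarith
  have hE1 : ∀ s ∈ Icc 0 x, 4 * qf c ^ 2 * s ≤
      -2 * prof (c + s) * qf (c + s) + 2 * prof (c - s) * qf (c - s) + 4 * s := fun s hs => by
    have := le_of_deriv (g := fun s => -2 * prof (c + s) * qf (c + s)
        + 2 * prof (c - s) * qf (c - s) + 4 * s - 4 * qf c ^ 2 * s)
      (g' := fun s => 2 * qf (c + s) ^ 2 + 2 * qf (c - s) ^ 2 - 4 * qf c ^ 2)
      hs.1 (fun r hr => by
        have hr' := hsub s hs r hr
        have := (((((dI1 r hr').const_mul (-2)).mul (dq1 r hr')).add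
          (((dI2 r hr').const_mul 2).mul (dq2 r hr'))).add ((hasDerivAt_id r).const_mul 4)).sub
          ((hasDerivAt_id r).const_mul (4 * qf c ^ 2))
        refine HasDerivAt.congr_deriv this ?_
        have p1 := (prof_pos (c + r)).ne'
        have p2 := (prof_pos (c - r)).ne'
        field_simp; ring) (fun r hr => by
        have := hconv r (hsub s hs r hr)
        linarith)
    simp only [add_zero, sub_zero] at this
    linarith
  have hE : 2 * prof c ^ 2 + 2 * qf c ^ 2 * x ^ 2 ≤
      prof (c + x) ^ 2 + prof (c - x) ^ 2 + 2 * x ^ 2 := by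
    have := le_of_deriv (g := fun s => prof (c + s) ^ 2 + prof (c - s) ^ 2 + 2 * s ^ 2
        - 2 * qf c ^ 2 * s ^ 2)
      (g' := fun s => -2 * prof (c + s) * qf (c + s) + 2 * prof (c - s) * qf (c - s) + 4 * s
        - 4 * qf c ^ 2 * s)
      hx (fun r hr => by
        have := ((((dI1 r hr).pow 2).add ((dI2 r hr).pow 2)).add
          ((hasDerivAt_pow 2 r).const_mul 2)).sub ((hasDerivAt_pow 2 r).const_mul (2 * qf c ^ 2))
        refine HasDerivAt.congr_deriv this ?_
        simp; ring) (fun r hr => by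
        have := hE1 r hr
        linarith)
    simp only [add_zero, sub_zero] at this
    linarith
  have hD1 : ∀ s ∈ Icc 0 x, -2 * prof (c + s) * qf (c + s) - 2 * prof (c - s) * qf (c - s)
      ≤ -4 * prof c * qf c := fun s hs => by
    have := le_of_deriv (g := fun s => 2 * prof (c + s) * qf (c + s)
        + 2 * prof (c - s) * qf (c - s))
      (g' := fun s => 2 * qf (c - s) ^ 2 - 2 * qf (c + s) ^ 2)
      hs.1 (fun r hr => by
        have hr' := hsub s hs r hr
        have := ((((dI1 r hr').const_mul 2).mul (dq1 r hr')).add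
          (((dI2 r hr').const_mul 2).mul (dq2 r hr')))
        refine HasDerivAt.congr_deriv this ?_
        have p1 := (prof_pos (c + r)).ne'
        have p2 := (prof_pos (c - r)).ne'
        field_simp; ring) (fun r hr => by
        have := hq r (hsub s hs r hr)
        linarith)
    simp only [add_zero, sub_zero] at this
    linarith
  have hD : prof (c + x) ^ 2 - prof (c - x) ^ 2 ≤ -4 * prof c * qf c * x := by
    have := le_of_deriv (g := fun s => prof (c - s) ^ 2 - prof (c + s) ^ 2 + -4 * prof c * qf c * s)
      (g' := fun s => 2 * prof (c + s) * qf (c + s) + 2 * prof (c - s) * qf (c - s)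
         + -4 * prof c * qf c)
      hx (fun r hr => by
        have := (((dI2 r hr).pow 2).sub ((dI1 r hr).pow 2)).add
          ((hasDerivAt_id r).const_mul (-4 * prof c * qf c))
        refine HasDerivAt.congr_deriv this ?_
        simp; ring) (fun r hr => by
        have := hD1 r hr
        linarith)
    simp only [add_zero, sub_zero] at this
    linarith
  have hD0 : 0 ≤ prof (c + x) ^ 2 - prof (c - x) ^ 2 := by
    have := phi_le_of_sq (hq x hxx)
    have h3 := prof_pos (c - x)
    have h4 : prof (c - x) ≤ prof (c + x) := this
    nlinarith
  apply sqrt_step (prof_pos c) (by positivity) (by positivity)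
  have hsq : (prof (c + x) ^ 2 - prof (c - x) ^ 2) ^ 2 ≤ (-4 * prof c * qf c * x) ^ 2 :=
    pow_le_pow_left₀ hD0 hD 2
  have h5 : 0 ≤ prof c ^ 2 := by positivity
  nlinarith

lemma prof_one_sub {p : ℝ} (hp : p ∈ Ioo (0:ℝ) 1) : prof (1 - p) = prof p := by
  unfold prof
  rw [qf_one_sub hp]; simp [phi]

lemma two_point {a b : ℝ} (ha : a ∈ Ioo (0:ℝ) 1) (hb : b ∈ Ioo (0:ℝ) 1) :
    prof ((a + b) / 2) ≤ (√(prof a ^ 2 + ((a - b) / 2) ^ 2) + √(prof b ^ 2 + ((a - b) / 2) ^ 2)) / 2 := by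
  wlog h : b ≤ a generalizing a b
  · have := this hb ha (by linarith)
    rw [add_comm, show ((a - b) / 2) ^ 2 = ((b - a) / 2) ^ 2 by ring]
    linarith
  rcases le_total ((a + b) / 2) (1 / 2) with hc | hc
  · have := two_point_aux (c := (a + b) / 2) (x := (a - b) / 2) hc (by linarith) (by linarith [hb.1])
    rw [show (a + b) / 2 + (a - b) / 2 = a by ring, show (a + b) / 2 - (a - b) / 2 = b by ring] at this
    linarith
  · have := two_point_aux (c := 1 - (a + b) / 2) (x := (a - b) / 2) (by linarith) (by linarith)
      (by linarith [ha.2])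
    rw [show 1 - (a + b) / 2 + (a - b) / 2 = 1 - b by ring,
      show 1 - (a + b) / 2 - (a - b) / 2 = 1 - a by ring, prof_one_sub ha, prof_one_sub hb,
      prof_one_sub ⟨by linarith [ha.1, hb.1], by linarith [ha.2, hb.2]⟩] at this
    linarith

/-! ### Random walks -/

set_option linter.unusedSectionVars false

section walk
variable {E : Type*} [NormedAddCommGroup E] [InnerProductSpace ℝ E]

/-- average of `F` over the random walk with steps `± v`, `v ∈ l`, started at `x` -/
noncomputable def avg : List E → (E → ℝ) → E → ℝ
  | [], F, x => F x
  | v :: l, F, x => (avg l F (x + v) + avg l F (x - v)) / 2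

lemma avg_mono {F G : E → ℝ} (h : ∀ y, F y ≤ G y) (l : List E) (x : E) : avg l F x ≤ avg l G x := by
  induction l generalizing x with
  | nil => exact h x
  | cons v l ih => simp only [avg]; linarith [ih (x + v), ih (x - v)]

lemma avg_const (c : ℝ) (l : List E) (x : E) : avg l (fun _ => c) x = c := by
  induction l generalizing x with
  | nil => rfl
  | cons v l ih => simp only [avg, ih]; ring

lemma avg_add (F G : E → ℝ) (l : List E) (x : E) :
    avg l (fun y => F y + G y) x = avg l F x + avg l G x := by
  induction l generalizing x with
  | nil => rfl
  | cons v l ih => simp only [avg, ih]; ring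

lemma avg_neg (F : E → ℝ) (l : List E) (x : E) :
    avg l (fun y => - F y) x = - avg l F x := by
  induction l generalizing x with
  | nil => rfl
  | cons v l ih => simp only [avg, ih]; ring

lemma avg_shift (F : E → ℝ) (w : E) (l : List E) (x : E) :
    avg l (fun y => F (y + w)) x = avg l F (x + w) := by
  induction l generalizing x with
  | nil => rfl
  | cons v l ih =>
    simp only [avg, ih]
    rw [show x + v + w = x + w + v by abel, show x - v + w = x + w - v by abel]

lemma avg_mem {F : E → ℝ} {a b : ℝ} (h : ∀ y, F y ∈ Icc a b) (l : List E) (x : E) :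
    avg l F x ∈ Icc a b := by
  constructor
  · rw [← avg_const a l x]; exact avg_mono (fun y => (h y).1) l x
  · rw [← avg_const b l x]; exact avg_mono (fun y => (h y).2) l x

lemma sqrt_add_sq_triangle (a b c d : ℝ) :
    √(((a + b) / 2) ^ 2 + ((c + d) / 2) ^ 2) ≤ (√(a ^ 2 + c ^ 2) + √(b ^ 2 + d ^ 2)) / 2 := by
  have h1 := Real.sqrt_nonneg (a ^ 2 + c ^ 2)
  have h2 := Real.sqrt_nonneg (b ^ 2 + d ^ 2)
  have e1 := Real.sq_sqrt (show 0 ≤ a ^ 2 + c ^ 2 by positivity)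
  have e2 := Real.sq_sqrt (show 0 ≤ b ^ 2 + d ^ 2 by positivity)
  apply Real.sqrt_le_iff.2 ⟨by positivity, ?_⟩
  have h3 : a * b + c * d ≤ √(a ^ 2 + c ^ 2) * √(b ^ 2 + d ^ 2) := by
    refine (abs_le_of_sq_le_sq' ?_ (by positivity)).2
    rw [mul_pow, e1, e2]
    nlinarith [sq_nonneg (a * d - b * c)]
  nlinarith

lemma avg_minkowski (R B : E → ℝ) (l : List E) (x : E) :
    √((avg l R x) ^ 2 + (avg l B x) ^ 2) ≤ avg l (fun y => √(R y ^ 2 + B y ^ 2)) x := by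
  induction l generalizing x with
  | nil => exact le_rfl
  | cons v l ih =>
    simp only [avg]
    refine (sqrt_add_sq_triangle _ _ _ _).trans ?_
    linarith [ih (x + v), ih (x - v)]

lemma sqrt_mono_aux {a b c d : ℝ} (ha : 0 ≤ a) (h : a ≤ b) (hc : |c| ≤ d) :
    √(a ^ 2 + c ^ 2) ≤ √(b ^ 2 + d ^ 2) := by
  apply Real.sqrt_le_sqrt
  have : c ^ 2 ≤ d ^ 2 := sq_le_sq' (by linarith [neg_abs_le c]) ((le_abs_self c).trans hc)
  nlinarith

lemma discrete_bobkov {f : E → ℝ} {η : ℝ} (hη : 0 < η) (hf : ∀ y, f y ∈ Icc η (1 - η))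
    {b : E → E → ℝ} (l : List E)
    (hb : ∀ v ∈ l, ∀ y, |f (y + (2:ℝ) • v) - f y| / 2 ≤ b v y ∧ |f (y - (2:ℝ) • v) - f y| / 2 ≤ b v y)
    (x : E) :
    prof (avg l f x) ≤ avg l (fun y => √(prof (f y) ^ 2 + (l.map fun v => b v y ^ 2).sum)) x := by
  induction l generalizing x with
  | nil => simp [avg, Real.sqrt_sq (prof_pos _).le]
  | cons v l ih =>
    have ih' := ih (fun w hw => hb w (List.mem_cons_of_mem _ hw))
    have hv := hb v (List.mem_cons_self)
    have hm : ∀ z, avg l f z ∈ Ioo (0:ℝ) 1 := fun z => by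
      have := avg_mem hf l z
      exact ⟨by linarith [this.1], by linarith [this.2]⟩
    set R : E → ℝ := fun y => √(prof (f y) ^ 2 + (l.map fun v => b v y ^ 2).sum) with hR
    have hsum : ∀ y, 0 ≤ (l.map fun v => b v y ^ 2).sum := fun y =>
      List.sum_nonneg (by simp only [List.mem_map]; rintro _ ⟨w, _, rfl⟩; positivity)
    have hRsq : ∀ y, √(prof (f y) ^ 2 + ((v :: l).map fun v => b v y ^ 2).sum)
        = √(R y ^ 2 + b v y ^ 2) := fun y => by
      rw [hR]; simp only [List.map_cons, List.sum_cons]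
      rw [Real.sq_sqrt (add_nonneg (sq_nonneg _) (hsum y))]
      congr 1; ring
    simp only [hRsq]
    have key : ∀ z, ∀ c : ℝ, |c| ≤ avg l (b v) z →
        √(prof (avg l f z) ^ 2 + c ^ 2) ≤ avg l (fun y => √(R y ^ 2 + b v y ^ 2)) z :=
      fun z c hc => (sqrt_mono_aux (prof_pos _).le (ih' z) hc).trans (avg_minkowski R (b v) l z)
    have hdiff : ∀ z w : E, (∀ y, |f (y + w) - f y| / 2 ≤ b v y) →
        |(avg l f (z + w) - avg l f z) / 2| ≤ avg l (b v) z := fun z w hw => by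
      have e : avg l f (z + w) - avg l f z = avg l (fun y => f (y + w) + - f y) z := by
        rw [avg_add, avg_neg, avg_shift]; ring
      have h1 : avg l (fun y => f (y + w) + - f y) z ≤ avg l (fun y => b v y + b v y) z :=
        avg_mono (fun y => by linarith [hw y, le_abs_self (f (y + w) - f y)]) l z
      have h2 : avg l (fun y => -(b v y + b v y)) z ≤ avg l (fun y => f (y + w) + - f y) z :=
        avg_mono (fun y => by linarith [hw y, neg_abs_le (f (y + w) - f y)]) l z
      rw [avg_neg, avg_add] at h2
      rw [avg_add (b v) (b v)] at h1
      rw [abs_le, e]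
      constructor <;> linarith
    simp only [avg]
    refine (two_point (hm _) (hm _)).trans ?_
    have k1 := key (x + v) ((avg l f (x + v) - avg l f (x - v)) / 2) (by
      have := hdiff (x + v) (-((2:ℝ) • v)) (fun y => by
        rw [← sub_eq_add_neg]; exact (hv y).2)
      rw [show x + v + -((2:ℝ) • v) = x - v by rw [two_smul]; abel] at this
      rw [← abs_neg, ← neg_div, neg_sub]; exact this)
    have k2 := key (x - v) ((avg l f (x + v) - avg l f (x - v)) / 2) (by
      have := hdiff (x - v) ((2:ℝ) • v) (fun y => (hv y).1)
      rw [show x - v + ((2:ℝ) • v) = x + v by rw [two_smul]; abel] at this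
      exact this)
    linarith

variable [MeasurableSpace E] [BorelSpace E]

/-- law of the random walk -/
noncomputable def law : List E → E → Measure E
  | [], x => Measure.dirac x
  | v :: l, x => (2⁻¹ : ENNReal) • (law l (x + v) + law l (x - v))

lemma law_prob (l : List E) (x : E) : IsProbabilityMeasure (law l x) := by
  induction l generalizing x with
  | nil => simp only [law]; infer_instance
  | cons v l ih =>
    constructor
    have h1 := (ih (x + v)).measure_univ
    have h2 := (ih (x - v)).measure_univ
    simp only [law, Measure.smul_apply, Measure.add_apply, h1, h2, smul_eq_mul]
    rw [one_add_one_eq_two]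
    exact ENNReal.inv_mul_cancel (by simp) (by simp)

lemma law_integrable {V : Type*} [NormedAddCommGroup V] (l : List E) (x : E) (F : E → V) :
    Integrable F (law l x) := by
  induction l generalizing x with
  | nil => simp only [law]; exact integrable_dirac (by simp)
  | cons v l ih =>
    simp only [law]
    exact ((ih _).add_measure (ih _)).smul_measure (by simp)

lemma law_cons {V : Type*} [NormedAddCommGroup V] [NormedSpace ℝ V] (v : E) (l : List E) (x : E) (F : E → V) :
    ∫ y, F y ∂(law (v :: l) x) = (2⁻¹ : ℝ) • (∫ y, F y ∂(law l (x + v)) + ∫ y, F y ∂(law l (x - v))) := by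
  simp only [law]
  rw [integral_smul_measure, integral_add_measure (law_integrable _ _ _) (law_integrable _ _ _)]
  simp

lemma avg_eq_integral (l : List E) (x : E) (F : E → ℝ) : avg l F x = ∫ y, F y ∂(law l x) := by
  induction l generalizing x with
  | nil => simp only [law, avg]; rw [integral_dirac]
  | cons v l ih => rw [law_cons, ← ih, ← ih]; simp only [avg, smul_eq_mul]; ring

lemma law_charFun (l : List E) (x t : E) :
    charFun (law l x) t = Complex.exp (inner ℝ x t * Complex.I) *
      (((l.map fun v => Real.cos (inner ℝ v t)).prod : ℝ) : ℂ) := by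
  induction l generalizing x with
  | nil => simp [law]
  | cons v l ih =>
    rw [charFun_apply, law_cons, ← charFun_apply, ← charFun_apply, ih, ih]
    simp only [List.map_cons, List.prod_cons, inner_add_left, inner_sub_left]
    push_cast
    rw [add_mul, sub_mul, Complex.exp_add, Complex.exp_sub, Complex.cos, neg_mul, Complex.exp_neg]
    simp only [Complex.real_smul]
    push_cast
    ring

end walk

/-! ### The Gaussian measure and the central limit theorem -/

section clt

lemma gauss_finite (n : ℕ) : IsFiniteMeasure (stdGaussian n) := by
  unfold stdGaussian
  apply isFiniteMeasure_withDensity_ofReal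
  have h := (GaussianFourier.integrable_cexp_neg_mul_sq_norm_add (V := EuclideanSpace ℝ (Fin n))
    (b := 1 / 2) (by norm_num) 0 0).norm
  have h2 := h.const_mul ((2 * Real.pi) ^ (-(n : ℝ) / 2))
  refine (h2.congr (Eventually.of_forall fun x => ?_)).2
  simp only [Complex.norm_exp]
  congr 2
  simp [← Complex.ofReal_pow]
  ring

lemma gauss_charFun (n : ℕ) (t : EuclideanSpace ℝ (Fin n)) :
    charFun (stdGaussian n) t = Complex.exp (-‖t‖ ^ 2 / 2) := by
  rw [charFun_apply]
  unfold stdGaussian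
  rw [integral_withDensity_eq_integral_toReal_smul (by fun_prop) (by simp)]
  have h := GaussianFourier.integral_cexp_neg_mul_sq_norm_add (V := EuclideanSpace ℝ (Fin n))
    (b := 1 / 2) (by norm_num) Complex.I t
  have e : ∀ x : EuclideanSpace ℝ (Fin n),
      (ENNReal.ofReal ((2 * Real.pi) ^ (-(n : ℝ) / 2) * Real.exp (-‖x‖ ^ 2 / 2))).toReal •
        Complex.exp ((inner ℝ x t : ℝ) * Complex.I) =
      (((2 * Real.pi) ^ (-(n : ℝ) / 2) : ℝ) : ℂ) *
        Complex.exp (-(1 / 2) * ‖x‖ ^ 2 + Complex.I * (inner ℝ t x : ℝ)) := fun x => by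
    rw [ENNReal.toReal_ofReal (by positivity), Complex.real_smul, Complex.exp_add,
      real_inner_comm, mul_comm Complex.I]
    push_cast
    rw [mul_assoc]
    congr 3
    ring_nf
  simp_rw [e]
  rw [integral_const_mul, h]
  have e2 : ((Real.pi : ℂ) / (1 / 2)) = ((2 * Real.pi : ℝ) : ℂ) := by push_cast; ring
  rw [e2, finrank_euclideanSpace_fin, ← mul_assoc,
    show ((n : ℂ) / 2) = (((n : ℝ) / 2 : ℝ) : ℂ) by push_cast; rfl,
    ← Complex.ofReal_cpow (by positivity), ← Complex.ofReal_mul,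
    ← Real.rpow_add (by positivity)]
  have e3 : -(n : ℝ) / 2 + (n : ℝ) / 2 = 0 := by ring
  rw [e3, Real.rpow_zero, Complex.ofReal_one, one_mul, Complex.I_sq]
  congr 1
  ring

lemma gauss_eq (n : ℕ) :
    stdGaussian n = ProbabilityTheory.stdGaussian (EuclideanSpace ℝ (Fin n)) := by
  have := gauss_finite n
  apply Measure.ext_of_charFun
  ext t
  rw [gauss_charFun, ProbabilityTheory.charFun_stdGaussian]

instance gauss_prob (n : ℕ) : IsProbabilityMeasure (stdGaussian n) := by
  rw [gauss_eq]; infer_instance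

lemma gauss_halfspace (n : ℕ) (i : Fin n) (b : ℝ) :
    (stdGaussian n).real {x | x i < b} = gaussCDF b := by
  have h := ProbabilityTheory.measurePreserving_eval_multivariateGaussian
    (μ := (0 : EuclideanSpace ℝ (Fin n))) (S := (1 : Matrix (Fin n) (Fin n) ℝ))
    Matrix.PosSemidef.one (i := i)
  rw [ProbabilityTheory.multivariateGaussian_zero_one, ← gauss_eq] at h
  have h2 := h.measure_preimage (s := Iio b) measurableSet_Iio.nullMeasurableSet
  rw [cdf_eq, measureReal_def, measureReal_def]
  congr 1
  simp at h2
  exact h2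

lemma cos_pow_tendsto (t : ℝ) :
    Tendsto (fun N : ℕ => Real.cos (t / √N) ^ N) atTop (𝓝 (Real.exp (-t ^ 2 / 2))) := by
  have key : Tendsto (fun N : ℕ => (N : ℝ) * (Real.cos (t / √N) - 1)) atTop (𝓝 (-t ^ 2 / 2)) := by
    have hb : ∀ᶠ N : ℕ in atTop, ‖(N : ℝ) * (Real.cos (t / √N) - 1) - (-t ^ 2 / 2)‖ ≤
        t ^ 4 * (5 / 96) * (1 / (N : ℝ)) := by
      obtain ⟨M, hM⟩ := exists_nat_ge (t ^ 2)
      filter_upwards [eventually_ge_atTop (max M 1)] with N hN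
      have hN1 : 1 ≤ N := (le_max_right _ _).trans hN
      have hN2 : t ^ 2 ≤ N := hM.trans (by exact_mod_cast (le_max_left _ _).trans hN)
      have hN0 : (0:ℝ) < N := by exact_mod_cast hN1
      have hs : (√(N:ℝ)) ^ 2 = N := Real.sq_sqrt hN0.le
      have hx2 : (t / √N) ^ 2 = t ^ 2 / N := by rw [div_pow, hs]
      have habs : |t / √N| ≤ 1 := by
        rw [← sq_le_one_iff_abs_le_one, hx2, div_le_one hN0]; exact hN2
      have hc := Real.cos_bound habs
      have h4 : |t / √N| ^ 4 = t ^ 4 / N ^ 2 := by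
        rw [show |t / √N| ^ 4 = (|t / √N| ^ 2) ^ 2 by ring, sq_abs, hx2]; ring
      rw [h4, hx2] at hc
      have e : (N : ℝ) * (Real.cos (t / √N) - 1) - (-t ^ 2 / 2) =
          N * (Real.cos (t / √N) - (1 - t ^ 2 / N / 2)) := by field_simp; ring
      rw [e, norm_mul, Real.norm_eq_abs, Real.norm_eq_abs, abs_of_pos hN0]
      calc _ ≤ (N:ℝ) * (t ^ 4 / N ^ 2 * (5 / 96)) := by gcongr
        _ = _ := by field_simp
    have hz : Tendsto (fun N : ℕ => t ^ 4 * (5 / 96) * (1 / (N : ℝ))) atTop (𝓝 0) := by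
      simpa using tendsto_one_div_atTop_nhds_zero_nat.const_mul (t ^ 4 * (5 / 96) : ℝ)
    exact tendsto_sub_nhds_zero_iff.1 (squeeze_zero_norm' hb hz)
  have := Real.tendsto_one_add_pow_exp_of_tendsto key
  simpa using this

/-- steps of the random walk -/
noncomputable def steps (n N : ℕ) : List (EuclideanSpace ℝ (Fin n)) :=
  (List.finRange n).flatMap fun i => List.replicate N ((√(N:ℝ))⁻¹ • EuclideanSpace.single i (1:ℝ))

lemma steps_prod (n N : ℕ) (g : EuclideanSpace ℝ (Fin n) → ℝ) :
    ((steps n N).map g).prod = ∏ i, g ((√(N:ℝ))⁻¹ • EuclideanSpace.single i (1:ℝ)) ^ N := by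
  unfold steps
  rw [List.map_flatMap, List.flatMap_def, List.prod_flatten, List.map_map]
  simp [Function.comp_def, List.prod_ofFn, ← List.ofFn_eq_map]

lemma steps_sum (n N : ℕ) (g : EuclideanSpace ℝ (Fin n) → ℝ) :
    ((steps n N).map g).sum = ∑ i, N * g ((√(N:ℝ))⁻¹ • EuclideanSpace.single i (1:ℝ)) := by
  unfold steps
  rw [List.map_flatMap, List.flatMap_def, List.sum_flatten, List.map_map]
  simp [Function.comp_def, List.sum_ofFn, ← List.ofFn_eq_map]

lemma clt (n : ℕ) (F : EuclideanSpace ℝ (Fin n) → ℝ) (hF : Continuous F)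
    (C : ℝ) (hC : ∀ x, |F x| ≤ C) :
    Tendsto (fun N : ℕ => avg (steps n N) F 0) atTop (𝓝 (∫ x, F x ∂(stdGaussian n))) := by
  let μ : ℕ → ProbabilityMeasure (EuclideanSpace ℝ (Fin n)) := fun N =>
    ⟨law (steps n N) 0, law_prob _ _⟩
  let μ₀ : ProbabilityMeasure (EuclideanSpace ℝ (Fin n)) := ⟨stdGaussian n, gauss_prob n⟩
  have h : Tendsto μ atTop (𝓝 μ₀) := by
    apply ProbabilityMeasure.tendsto_of_tendsto_charFun
    intro t
    have e1 : ∀ N, charFun (μ N : Measure (EuclideanSpace ℝ (Fin n))) t =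
        ((∏ i, Real.cos (t i / √N) ^ N : ℝ) : ℂ) := fun N => by
      change charFun (law (steps n N) 0) t = _
      rw [law_charFun, steps_prod]
      simp only [inner_zero_left, Complex.ofReal_zero, zero_mul, Complex.exp_zero, one_mul]
      congr 1
      refine Finset.prod_congr rfl fun i _ => ?_
      rw [inner_smul_left, EuclideanSpace.inner_single_left]
      simp [div_eq_inv_mul]
    have e2 : charFun (μ₀ : Measure (EuclideanSpace ℝ (Fin n))) t =
        ((∏ i, Real.exp (-(t i) ^ 2 / 2) : ℝ) : ℂ) := by
      change charFun (stdGaussian n) t = _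
      rw [gauss_charFun, ← Real.exp_sum, Complex.ofReal_exp, ← Finset.sum_div, Finset.sum_neg_distrib,
        ← EuclideanSpace.real_norm_sq_eq]
      push_cast; rfl
    simp_rw [e1]
    rw [e2]
    exact (Complex.continuous_ofReal.tendsto _).comp
      (tendsto_finsetProd _ fun i _ => cos_pow_tendsto (t i))
  rw [ProbabilityMeasure.tendsto_iff_forall_integral_tendsto] at h
  have := h (BoundedContinuousFunction.ofNormedAddCommGroup F hF C hC)
  simp_rw [avg_eq_integral]
  exact this

end clt

/-! ### The functional inequality of Bobkov -/

lemma sqrt_lip {a b c : ℝ} (hc : 0 ≤ c) :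
    √(a ^ 2 + (b + c) ^ 2) ≤ √(a ^ 2 + b ^ 2) + c := by
  have e := Real.sq_sqrt (show 0 ≤ a ^ 2 + b ^ 2 by positivity)
  have h : b ≤ √(a ^ 2 + b ^ 2) := Real.le_sqrt_of_sq_le (by nlinarith [sq_nonneg a])
  apply Real.sqrt_le_iff.2 ⟨by positivity, ?_⟩
  nlinarith

lemma prof_le_one (p : ℝ) : prof p ≤ 1 := phi_le_one _

lemma sum_sq_le {n : ℕ} (L : EuclideanSpace ℝ (Fin n) →L[ℝ] ℝ) {ω : ℝ} (hω : 0 ≤ ω) :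
    ∑ i, (|L (EuclideanSpace.single i (1:ℝ))| + ω) ^ 2 ≤ (‖L‖ + n * ω) ^ 2 := by
  have h1 : ∀ i, |L (EuclideanSpace.single i (1:ℝ))| ≤ ‖L‖ := fun i => by
    have := L.le_opNorm (EuclideanSpace.single i (1:ℝ))
    simpa using this
  have h2 : ∑ i, (L (EuclideanSpace.single i (1:ℝ))) ^ 2 ≤ ‖L‖ ^ 2 := by
    have := (EuclideanSpace.basisFun (Fin n) ℝ).norm_dual L
    rw [this]
    simp
  have h3 : ∑ i, (|L (EuclideanSpace.single i (1:ℝ))| + ω) ^ 2 ≤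
      ∑ i : Fin n, ((L (EuclideanSpace.single i (1:ℝ))) ^ 2 + (2 * ω * ‖L‖ + ω ^ 2)) := by
    refine Finset.sum_le_sum fun i _ => ?_
    rw [add_sq, sq_abs]
    nlinarith [h1 i]
  rw [Finset.sum_add_distrib] at h3
  simp only [Finset.sum_const, Finset.card_univ, Fintype.card_fin, nsmul_eq_mul] at h3
  have hn : (n:ℝ) ≤ (n:ℝ) ^ 2 := by
    rcases Nat.eq_zero_or_pos n with h | h
    · simp [h]
    · have : (1:ℝ) ≤ n := by exact_mod_cast h
      nlinarith
  nlinarith [mul_nonneg (sub_nonneg.2 hn) (sq_nonneg ω)]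

lemma prof_comp_cont {X : Type*} [TopologicalSpace X] {f : X → ℝ} (hf : Continuous f)
    (h : ∀ x, f x ∈ Ioo (0:ℝ) 1) : Continuous fun x => prof (f x) :=
  continuous_iff_continuousAt.2 fun x =>
    ContinuousAt.comp (g := prof) (prof_hasDeriv (h x)).continuousAt hf.continuousAt

lemma bobkov {n : ℕ} {f : EuclideanSpace ℝ (Fin n) → ℝ} {η : ℝ} (hη : 0 < η)
    (hf : ∀ y, f y ∈ Icc η (1 - η)) (hd : ContDiff ℝ 1 f)
    (hu : UniformContinuous (fderiv ℝ f)) {M : ℝ} (hM : ∀ x, ‖fderiv ℝ f x‖ ≤ M) :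
    prof (∫ x, f x ∂(stdGaussian n)) ≤
      ∫ x, √(prof (f x) ^ 2 + ‖fderiv ℝ f x‖ ^ 2) ∂(stdGaussian n) := by
  have hf' : ∀ y, f y ∈ Ioo (0:ℝ) 1 := fun y =>
    ⟨by linarith [(hf y).1], by linarith [(hf y).2]⟩
  have hdc : Continuous (fderiv ℝ f) := hd.continuous_fderiv one_ne_zero
  have hdiff : Differentiable ℝ f := hd.differentiable one_ne_zero
  set R : EuclideanSpace ℝ (Fin n) → ℝ := fun x => √(prof (f x) ^ 2 + ‖fderiv ℝ f x‖ ^ 2) with hR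
  have hRc : Continuous R := by
    have := prof_comp_cont hd.continuous hf'
    fun_prop
  have hRb : ∀ x, |R x| ≤ 1 + M := fun x => by
    rw [abs_of_nonneg (Real.sqrt_nonneg _)]
    have h1 := prof_le_one (f x)
    have h2 := prof_pos (f x)
    have h3 := norm_nonneg (fderiv ℝ f x)
    have h4 := hM x
    refine Real.sqrt_le_iff.2 ⟨by linarith, ?_⟩
    nlinarith
  have hfb : ∀ x, |f x| ≤ 1 := fun x => by
    rw [abs_of_pos (hf' x).1]; exact (hf' x).2.le
  have cf := clt n f hd.continuous 1 hfb
  have cR := clt n R hRc _ hRb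
  have hIntg : ∫ x, f x ∂(stdGaussian n) ∈ Icc η (1 - η) :=
    isClosed_Icc.mem_of_tendsto cf (Eventually.of_forall fun N => avg_mem hf _ _)
  have hIntg' : ∫ x, f x ∂(stdGaussian n) ∈ Ioo (0:ℝ) 1 :=
    ⟨by linarith [hIntg.1], by linarith [hIntg.2]⟩
  have cp : Tendsto (fun N : ℕ => prof (avg (steps n N) f 0)) atTop
      (𝓝 (prof (∫ x, f x ∂(stdGaussian n)))) :=
    (prof_hasDeriv hIntg').continuousAt.tendsto.comp cf
  have main : ∀ ω > 0, prof (∫ x, f x ∂(stdGaussian n)) ≤ ∫ x, R x ∂(stdGaussian n) + n * ω := by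
    intro ω hω
    refine le_of_tendsto_of_tendsto cp (cR.add_const (n * ω)) ?_
    obtain ⟨δ, hδ, hδ'⟩ := Metric.uniformContinuous_iff.1 hu ω hω
    have hsmall : Tendsto (fun N : ℕ => 2 * (√(N:ℝ))⁻¹) atTop (𝓝 0) := by
      have := (tendsto_inv_atTop_zero.comp
        (Real.tendsto_sqrt_atTop.comp (tendsto_natCast_atTop_atTop (R := ℝ)))).const_mul (2:ℝ)
      simpa using this
    filter_upwards [hsmall.eventually (gt_mem_nhds hδ), eventually_ge_atTop 1] with N hN hN1
    have hN0 : (0:ℝ) < N := by exact_mod_cast hN1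
    set d : ℝ := (√(N:ℝ))⁻¹ with hdd
    have hd0 : 0 < d := by positivity
    have hd2 : N * d ^ 2 = 1 := by
      rw [hdd, inv_pow, Real.sq_sqrt hN0.le]; field_simp
    let b : EuclideanSpace ℝ (Fin n) → EuclideanSpace ℝ (Fin n) → ℝ := fun v y =>
      |fderiv ℝ f y v| + ω * d
    have hloc : ∀ w : EuclideanSpace ℝ (Fin n), ‖w‖ ≤ 2 * d → ∀ y,
        |f (y + w) - f y| ≤ |fderiv ℝ f y w| + ω * (2 * d) := fun w hw y => by
      have hmv := (convex_closedBall y (2 * d)).norm_image_sub_le_of_norm_fderiv_le'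
        (𝕜 := ℝ) (f := f) (φ := fderiv ℝ f y) (C := ω) (x := y) (y := y + w)
        (fun x _ => hdiff x) (fun x hx => by
          rw [← dist_eq_norm]
          exact (hδ' ((Metric.mem_closedBall.1 hx).trans_lt hN)).le)
        (Metric.mem_closedBall_self (by positivity)) (by simpa using hw)
      rw [add_sub_cancel_left, Real.norm_eq_abs] at hmv
      have h1 : ω * ‖w‖ ≤ ω * (2 * d) := by gcongr
      have h2 := abs_sub_abs_le_abs_sub (f (y + w) - f y) (fderiv ℝ f y w)
      linarith
    have hstep : ∀ v ∈ steps n N, ‖v‖ = d := fun v hv => by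
      unfold steps at hv
      simp only [List.mem_flatMap, List.mem_replicate] at hv
      obtain ⟨i, _, _, rfl⟩ := hv
      rw [norm_smul]
      simp [hdd]
    have hbo := discrete_bobkov hη hf (b := b) (steps n N) (fun v hv y => by
      have hv' := hstep v hv
      have hn2 : ‖(2:ℝ) • v‖ ≤ 2 * d := by rw [norm_smul, hv']; simp
      have h1 := hloc _ hn2 y
      have h2 := hloc (-((2:ℝ) • v)) (by rw [norm_neg]; exact hn2) y
      rw [← sub_eq_add_neg] at h2
      rw [map_neg, abs_neg] at h2
      rw [map_smul, smul_eq_mul, abs_mul, abs_two] at h1 h2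
      constructor <;> simp only [b] <;> linarith) 0
    refine hbo.trans ?_
    rw [← avg_const (n * ω) (steps n N) 0, ← avg_add]
    refine avg_mono (fun y => ?_) _ _
    rw [steps_sum]
    have e : ∑ i : Fin n, (N:ℝ) * b (d • EuclideanSpace.single i (1:ℝ)) y ^ 2 =
        ∑ i : Fin n, (|fderiv ℝ f y (EuclideanSpace.single i (1:ℝ))| + ω) ^ 2 := by
      refine Finset.sum_congr rfl fun i _ => ?_
      simp only [b]
      rw [map_smul, smul_eq_mul, abs_mul, abs_of_pos hd0]
      calc _ = N * d ^ 2 * (|fderiv ℝ f y (EuclideanSpace.single i (1:ℝ))| + ω) ^ 2 := by ring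
        _ = _ := by rw [hd2, one_mul]
    rw [e]
    refine le_trans ?_ (sqrt_lip (by positivity))
    exact Real.sqrt_le_sqrt (by linarith [sum_sq_le (fderiv ℝ f y) hω.le])
  have lim : Tendsto (fun ω : ℝ => ∫ x, R x ∂(stdGaussian n) + n * ω) (𝓝[>] 0)
      (𝓝 (∫ x, R x ∂(stdGaussian n) + n * 0)) := by
    apply Tendsto.mono_left _ nhdsWithin_le_nhds
    exact Continuous.tendsto (by fun_prop) 0
  have := ge_of_tendsto lim (eventually_mem_nhdsWithin.mono fun ω hω => main ω hω)
  simpa using this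

/-! ### Smooth cutoffs and the isoperimetric inequality -/

lemma cutoff {n : ℕ} {K : Set (EuclideanSpace ℝ (Fin n))} (hK : IsCompact K) (hne : K.Nonempty)
    {t L : ℝ} (ht : 0 < t) (hL : 1 / t < L) :
    ∃ f : EuclideanSpace ℝ (Fin n) → ℝ, ContDiff ℝ 1 f ∧ HasCompactSupport f ∧
      (∀ x, f x ∈ Icc (0:ℝ) 1) ∧ (∀ x ∈ K, f x = 1) ∧ (∀ x ∉ Metric.cthickening t K, f x = 0) ∧
      ∀ x, ‖fderiv ℝ f x‖ ≤ L := by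
  have hL0 : 0 < L := lt_trans (by positivity) hL
  have hLt : 1 / L < t := by rw [div_lt_comm₀ (by positivity) (by positivity)]; exact hL
  set ρ : ℝ := (t - 1 / L) / 2 with hρ
  have hρ0 : 0 < ρ := by rw [hρ]; linarith
  have hρ1 : L * (t - 2 * ρ) = 1 := by rw [hρ]; field_simp; ring
  let g : EuclideanSpace ℝ (Fin n) → ℝ := fun x => max 0 (min 1 (L * (t - ρ - Metric.infDist x K)))
  have hgc : Continuous g := by
    have := Metric.continuous_infDist_pt K
    fun_prop
  have hg01 : ∀ x, g x ∈ Icc (0:ℝ) 1 := fun x =>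
    ⟨le_max_left _ _, max_le zero_le_one (min_le_left _ _)⟩
  have hgl : ∀ x y, |g x - g y| ≤ L * dist x y := fun x y => by
    have h1 := abs_max_sub_max_le_max 0 (min 1 (L * (t - ρ - Metric.infDist x K)))
      0 (min 1 (L * (t - ρ - Metric.infDist y K)))
    have h2 := abs_min_sub_min_le_max 1 (L * (t - ρ - Metric.infDist x K))
      1 (L * (t - ρ - Metric.infDist y K))
    have h3 : |L * (t - ρ - Metric.infDist x K) - L * (t - ρ - Metric.infDist y K)| ≤
        L * dist x y := by
      rw [← mul_sub, abs_mul, abs_of_pos hL0]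
      gcongr
      rw [abs_le]
      have a1 := Metric.infDist_le_infDist_add_dist (s := K) (x := x) (y := y)
      have a2 := Metric.infDist_le_infDist_add_dist (s := K) (x := y) (y := x)
      rw [dist_comm y x] at a2
      constructor <;> linarith
    have h0 : 0 ≤ L * dist x y := by positivity
    simp only [sub_self, abs_zero] at h1 h2
    exact h1.trans (max_le h0 (h2.trans (max_le h0 h3)))
  let φ : ContDiffBump (0 : EuclideanSpace ℝ (Fin n)) := ⟨ρ / 2, ρ, by positivity, by linarith⟩
  let w : EuclideanSpace ℝ (Fin n) → ℝ := φ.normed volume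
  have hw0 : ∀ y, 0 ≤ w y := fun y => φ.nonneg_normed y
  have hwi : Integrable w := φ.integrable_normed
  have hw1 : ∫ y, w y = 1 := φ.integral_normed
  let f : EuclideanSpace ℝ (Fin n) → ℝ :=
    convolution w g (ContinuousLinearMap.lsmul ℝ ℝ) volume
  have hfe : ∀ x, f x = ∫ y, w y * g (x - y) := fun x => rfl
  have hIntg : ∀ x, Integrable fun y => w y * g (x - y) := fun x => by
    refine hwi.mul_bdd (c := 1) (by fun_prop) (Eventually.of_forall fun y => ?_)
    rw [Real.norm_eq_abs, abs_of_nonneg (hg01 _).1]; exact (hg01 _).2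
  have hf01 : ∀ x, f x ∈ Icc (0:ℝ) 1 := fun x => by
    rw [hfe]
    constructor
    · exact integral_nonneg fun y => mul_nonneg (hw0 y) (hg01 _).1
    · rw [← hw1]
      refine integral_mono (hIntg x) hwi fun y => ?_
      exact mul_le_of_le_one_right (hw0 y) (hg01 _).2
  have hfl : LipschitzWith ⟨L, hL0.le⟩ f := by
    refine LipschitzWith.of_dist_le_mul fun x y => ?_
    rw [Real.dist_eq, hfe, hfe, ← integral_sub (hIntg x) (hIntg y)]
    calc |∫ z, (w z * g (x - z) - w z * g (y - z))| ≤ ∫ z, w z * (L * dist x y) := by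
          rw [← Real.norm_eq_abs]
          refine norm_integral_le_of_norm_le (hwi.mul_const _) (Eventually.of_forall fun z => ?_)
          rw [← mul_sub, norm_mul, Real.norm_eq_abs, Real.norm_eq_abs, abs_of_nonneg (hw0 z)]
          have := hgl (x - z) (y - z)
          rw [dist_sub_right] at this
          exact mul_le_mul_of_nonneg_left this (hw0 z)
      _ = L * dist x y := by rw [integral_mul_const, hw1, one_mul]
  have hzero : ∀ x ∉ Metric.cthickening t K, f x = 0 := fun x hx => by
    have hd : t < Metric.infDist x K := by
      by_contra hle
      obtain ⟨z, hz, hz'⟩ := hK.exists_infDist_eq_dist hne x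
      exact hx (Metric.mem_cthickening_of_dist_le x z t K hz (by linarith))
    have hgz : ∀ y ∈ Metric.ball x ρ, g y = 0 := fun y hy => by
      have := Metric.infDist_le_infDist_add_dist (s := K) (x := x) (y := y)
      rw [dist_comm] at this
      have h1 : L * (t - ρ - Metric.infDist y K) ≤ 0 :=
        mul_nonpos_of_nonneg_of_nonpos hL0.le (by linarith [Metric.mem_ball.1 hy])
      exact max_eq_left ((min_le_right _ _).trans h1)
    have := φ.normed_convolution_eq_right (μ := volume) (g := g) (x₀ := x)
      (fun y hy => by rw [hgz y hy, hgz x (Metric.mem_ball_self hρ0)])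
    rw [hgz x (Metric.mem_ball_self hρ0)] at this
    exact this
  refine ⟨f, ?_, ?_, hf01, ?_, hzero, ?_⟩
  · exact φ.hasCompactSupport_normed.contDiff_convolution_left (n := 1) _ φ.contDiff_normed
      hgc.locallyIntegrable
  · exact HasCompactSupport.intro hK.cthickening hzero
  · intro x hx
    have hgz : ∀ y ∈ Metric.ball x ρ, g y = 1 := fun y hy => by
      have h0 := Metric.infDist_le_dist_of_mem (x := y) hx
      have h1 : 1 ≤ L * (t - ρ - Metric.infDist y K) := by
        rw [← hρ1]
        have := Metric.mem_ball.1 hy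
        exact mul_le_mul_of_nonneg_left (by linarith) hL0.le
      simp only [g]
      rw [min_eq_left h1]; simp
    have := φ.normed_convolution_eq_right (μ := volume) (g := g) (x₀ := x)
      (fun y hy => by rw [hgz y hy, hgz x (Metric.mem_ball_self hρ0)])
    rw [hgz x (Metric.mem_ball_self hρ0)] at this
    exact this
  · intro x
    exact norm_fderiv_le_of_lipschitz ℝ hfl

lemma phi_tendsto_bot : Tendsto phi atBot (𝓝 0) := by
  have h : Tendsto (fun s : ℝ => -s ^ 2 / 2) atBot atBot := by
    have h1 : Tendsto (fun s : ℝ => s ^ 2 / 2) atBot atTop :=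
      (((tendsto_pow_atTop two_ne_zero).comp tendsto_neg_atBot_atTop).congr
        fun s : ℝ => by simp).atTop_div_const two_pos
    refine (tendsto_neg_atTop_atBot.comp h1).congr fun s => ?_
    simp; ring
  have := (Real.tendsto_exp_atBot.comp h).div_const (√(2 * Real.pi))
  rw [zero_div] at this
  exact this

lemma prof_tendsto_zero : Tendsto prof (𝓝[>] 0) (𝓝 0) := by
  rw [Metric.tendsto_nhds]
  intro ε hε
  obtain ⟨s, hs, hs0⟩ := ((phi_tendsto_bot.eventually (gt_mem_nhds hε)).and
    (eventually_le_atBot 0)).exists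
  have : Ioo 0 (gaussCDF s) ∈ 𝓝[>] (0:ℝ) := Ioo_mem_nhdsGT (cdf_pos s)
  filter_upwards [this] with p hp
  have hp' : p ∈ Ioo (0:ℝ) 1 := ⟨hp.1, hp.2.trans (cdf_lt_one s)⟩
  have hq : qf p < s := by
    have := qf_lt hp' (cdf_mem s) hp.2
    rwa [qf_cdf] at this
  have h1 : phi (qf p) ≤ phi s := phi_le_of_sq (by nlinarith)
  rw [Real.dist_eq, sub_zero, abs_of_pos (prof_pos p)]
  exact h1.trans_lt hs

lemma increment {n : ℕ} {K : Set (EuclideanSpace ℝ (Fin n))} (hK : IsCompact K)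
    {t : ℝ} (ht : 0 < t) (h0 : 0 < (stdGaussian n).real K)
    (h1 : (stdGaussian n).real (Metric.cthickening t K) < 1) {m : ℝ}
    (hm : ∀ p ∈ Icc ((stdGaussian n).real K) ((stdGaussian n).real (Metric.cthickening t K)),
      m ≤ prof p) :
    m ≤ (1 + 1 / t) *
      ((stdGaussian n).real (Metric.cthickening t K) - (stdGaussian n).real K) := by
  set γ := stdGaussian n with hγ
  have hne : K.Nonempty := by
    rw [nonempty_iff_ne_empty]; rintro rfl; simp at h0
  set Kt := Metric.cthickening t K with hKt
  have hsub : K ⊆ Kt := Metric.self_subset_cthickening K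
  have hKm : MeasurableSet K := hK.measurableSet
  have hKtm : MeasurableSet Kt := Metric.isClosed_cthickening.measurableSet
  have hdiffm : γ.real (Kt \ K) = γ.real Kt - γ.real K := measureReal_sdiff hsub hKm
  have main : ∀ L > 1 / t, m ≤ (1 + L) * (γ.real Kt - γ.real K) := by
    intro L hL
    have hL0 : 0 < L := lt_trans (by positivity) hL
    obtain ⟨f, hfd, hfs, hf01, hfK, hfz, hfL⟩ := cutoff hK hne ht hL
    have hfint : Integrable f γ := by
      refine Integrable.of_bound (C := 1) hfd.continuous.aestronglyMeasurable
        (Eventually.of_forall fun x => ?_)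
      rw [Real.norm_eq_abs, abs_of_nonneg (hf01 x).1]; exact (hf01 x).2
    have hmem : ∫ x, f x ∂γ ∈ Icc (γ.real K) (γ.real Kt) := by
      constructor
      · rw [← integral_indicator_one hKm]
        refine integral_mono ((integrable_const 1).indicator hKm) hfint fun x => ?_
        by_cases hx : x ∈ K
        · simp [hx, hfK x hx]
        · simp [hx, (hf01 x).1]
      · rw [← integral_indicator_one hKtm]
        refine integral_mono hfint ((integrable_const 1).indicator hKtm) fun x => ?_
        by_cases hx : x ∈ Kt
        · simp [hx, (hf01 x).2]
        · simp [hx, hfz x hx]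
    have hmem' : ∫ x, f x ∂γ ∈ Ioo (0:ℝ) 1 := ⟨h0.trans_le hmem.1, hmem.2.trans_lt h1⟩
    have hfd0 : ∀ x ∉ Kt \ K, fderiv ℝ f x = 0 := fun x hx => by
      by_cases hxK : x ∈ K
      · apply IsLocalMax.fderiv_eq_zero
        exact Eventually.of_forall fun y => by rw [hfK x hxK]; exact (hf01 y).2
      · have hxt : x ∉ Kt := fun h => hx ⟨h, hxK⟩
        apply IsLocalMin.fderiv_eq_zero
        exact Eventually.of_forall fun y => by rw [hfz x hxt]; exact (hf01 y).1
    have hf01' : ∀ x ∉ Kt \ K, f x = 0 ∨ f x = 1 := fun x hx => by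
      by_cases hxK : x ∈ K
      · exact Or.inr (hfK x hxK)
      · exact Or.inl (hfz x fun h => hx ⟨h, hxK⟩)
    have hη : ∀ η ∈ Ioo (0:ℝ) (1 / 2), prof (η + (1 - 2 * η) * ∫ x, f x ∂γ) ≤
        prof η + (1 + L) * γ.real (Kt \ K) := fun η hη => by
      have hη1 := hη.1
      have hη2 := hη.2
      let F : EuclideanSpace ℝ (Fin n) → ℝ := fun x => η + (1 - 2 * η) * f x
      have hF : ∀ x, F x ∈ Icc η (1 - η) := fun x => by
        have := hf01 x
        constructor
        · simp only [F]; nlinarith [this.1]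
        · simp only [F]; nlinarith [this.2]
      have hFd : ContDiff ℝ 1 F := contDiff_const.add (contDiff_const.mul hfd)
      have hFf : ∀ x, fderiv ℝ F x = (1 - 2 * η) • fderiv ℝ f x := fun x => by
        have hx : DifferentiableAt ℝ f x := hfd.differentiable one_ne_zero x
        simp only [F]
        rw [fderiv_const_add, fderiv_const_mul hx]
      have hfu : UniformContinuous (fderiv ℝ f) :=
        (hfs.fderiv ℝ).uniformContinuous_of_continuous (hfd.continuous_fderiv one_ne_zero)
      have hFu : UniformContinuous (fderiv ℝ F) := by
        have : fderiv ℝ F = fun x => (1 - 2 * η) • fderiv ℝ f x := funext hFf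
        rw [this]
        exact hfu.const_smul (1 - 2 * η)
      have hFn : ∀ x, ‖fderiv ℝ F x‖ ≤ ‖fderiv ℝ f x‖ := fun x => by
        rw [hFf, norm_smul, Real.norm_eq_abs, abs_of_pos (by linarith)]
        exact mul_le_of_le_one_left (norm_nonneg _) (by linarith)
      have hb := bobkov hη1 hF hFd hFu (M := L) fun x => (hFn x).trans (hfL x)
      have hI : ∫ x, F x ∂γ = η + (1 - 2 * η) * ∫ x, f x ∂γ := by
        simp only [F]
        rw [integral_add (integrable_const _) (hfint.const_mul _), integral_const_mul]
        simp
      rw [← hγ, hI] at hb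
      refine hb.trans ?_
      have hpt : ∀ x, √(prof (F x) ^ 2 + ‖fderiv ℝ F x‖ ^ 2) ≤
          prof η + (Kt \ K).indicator (fun _ => 1 + L) x := fun x => by
        have hs := sqrt_lip (a := prof (F x)) (b := 0) (norm_nonneg (fderiv ℝ F x))
        rw [zero_add] at hs
        simp only [ne_eq, OfNat.ofNat_ne_zero, not_false_eq_true, zero_pow, add_zero] at hs
        rw [Real.sqrt_sq (prof_pos _).le] at hs
        refine hs.trans ?_
        by_cases hx : x ∈ Kt \ K
        · rw [indicator_of_mem hx]
          linarith [prof_pos η, prof_le_one (F x), (hFn x).trans (hfL x)]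
        · rw [indicator_of_notMem hx, hFf, hfd0 x hx, smul_zero, norm_zero, add_zero, add_zero]
          have hηm : η ∈ Ioo (0:ℝ) 1 := ⟨hη1, by linarith⟩
          rcases hf01' x hx with h | h
          · simp only [F, h, mul_zero, add_zero]; exact le_rfl
          · simp only [F, h]
            rw [show η + (1 - 2 * η) * 1 = 1 - η by ring, prof_one_sub hηm]
      have hdm : MeasurableSet (Kt \ K) := hKtm.diff hKm
      have hind : Integrable ((Kt \ K).indicator (fun _ => 1 + L)) γ :=
        (integrable_const _).indicator hdm
      calc _ ≤ ∫ x, (prof η + (Kt \ K).indicator (fun _ => 1 + L) x) ∂γ := by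
            refine integral_mono_of_nonneg (Eventually.of_forall fun x => Real.sqrt_nonneg _)
              ((integrable_const _).add hind) (Eventually.of_forall hpt)
        _ = _ := by
            rw [integral_add (integrable_const _) hind, integral_indicator hdm]
            simp
            ring
    have hlim1 : Tendsto (fun η : ℝ => prof (η + (1 - 2 * η) * ∫ x, f x ∂γ)) (𝓝[>] 0)
        (𝓝 (prof (∫ x, f x ∂γ))) := by
      refine (prof_hasDeriv hmem').continuousAt.tendsto.comp ?_
      have : Tendsto (fun η : ℝ => η + (1 - 2 * η) * ∫ x, f x ∂γ) (𝓝 0)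
          (𝓝 (0 + (1 - 2 * 0) * ∫ x, f x ∂γ)) := Continuous.tendsto (by fun_prop) 0
      simp only [mul_zero, sub_zero, one_mul, zero_add] at this
      exact this.mono_left nhdsWithin_le_nhds
    have hlim2 := prof_tendsto_zero.add_const ((1 + L) * γ.real (Kt \ K))
    rw [zero_add] at hlim2
    have := le_of_tendsto_of_tendsto hlim1 hlim2
      (by filter_upwards [Ioo_mem_nhdsGT (show (0:ℝ) < 1 / 2 by norm_num)] with η h using hη η h)
    rw [hdiffm] at this
    exact (hm _ hmem).trans this
  have lim : Tendsto (fun L : ℝ => (1 + L) * (γ.real Kt - γ.real K)) (𝓝[>] (1 / t))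
      (𝓝 ((1 + 1 / t) * (γ.real Kt - γ.real K))) := by
    apply Tendsto.mono_left _ nhdsWithin_le_nhds
    exact Continuous.tendsto (by fun_prop) (1 / t)
  exact ge_of_tendsto lim (eventually_mem_nhdsWithin.mono fun L hL => main L hL)

lemma dini {n : ℕ} {K : Set (EuclideanSpace ℝ (Fin n))} (hK : IsCompact K)
    (h0 : 0 < (stdGaussian n).real K) (h1 : (stdGaussian n).real K < 1) {c : ℝ} (hc0 : 0 < c)
    (hc1 : c < 1) :
    ∀ᶠ r in 𝓝[>] (0:ℝ), gaussCDF (qf ((stdGaussian n).real K) + c * r) ≤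
      (stdGaussian n).real (Metric.cthickening r K) := by
  set γ := stdGaussian n with hγ
  set p := γ.real K with hp
  have hpm : p ∈ Ioo (0:ℝ) 1 := ⟨h0, h1⟩
  have hα := prof_pos p
  have hq : Tendsto (fun r => γ.real (Metric.cthickening r K)) (𝓝[>] 0) (𝓝 p) := by
    have := tendsto_measure_cthickening_of_isCompact (μ := γ) hK
    exact ((ENNReal.tendsto_toReal (measure_ne_top _ _)).comp this).mono_left nhdsWithin_le_nhds
  have hder : HasDerivAt (fun r => gaussCDF (qf p + c * r)) (prof p * c) 0 := by
    have hi : HasDerivAt (fun r : ℝ => qf p + c * r) c 0 := by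
      simpa using ((hasDerivAt_id (0:ℝ)).const_mul c).const_add (qf p)
    have := (cdf_hasDeriv (qf p + c * 0)).comp (0:ℝ) hi
    rw [mul_zero, add_zero] at this
    exact this
  have hsl := hder.tendsto_slope_zero_right
  have hlt : prof p * c < prof p * ((c + 1) / 2) := by gcongr; linarith
  have hprof : ∀ᶠ y in 𝓝 p, prof p * ((c + 3) / 4) < prof y :=
    (prof_hasDeriv hpm).continuousAt.eventually (lt_mem_nhds (by
      calc prof p * ((c + 3) / 4) < prof p * 1 := by gcongr; linarith
        _ = prof p := mul_one _))
  obtain ⟨δ, hδ, hδ'⟩ := Metric.eventually_nhds_iff.1 hprof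
  have hsmall : ∀ᶠ r in 𝓝[>] (0:ℝ), (1 + r) * ((c + 1) / 2) < (c + 3) / 4 := by
    have : Tendsto (fun r : ℝ => (1 + r) * ((c + 1) / 2)) (𝓝 0) (𝓝 ((1 + 0) * ((c + 1) / 2))) :=
      Continuous.tendsto (by fun_prop) 0
    exact (this.mono_left nhdsWithin_le_nhds).eventually (gt_mem_nhds (by linarith))
  filter_upwards [hsl.eventually (gt_mem_nhds hlt), hsmall,
    hq.eventually (gt_mem_nhds (show p < p + δ by linarith)), self_mem_nhdsWithin] with r e1 e2 e3 hr
  have hr0 : (0:ℝ) < r := hr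
  have hpq : p ≤ γ.real (Metric.cthickening r K) :=
    measureReal_mono (Metric.self_subset_cthickening K)
  rcases lt_or_ge (γ.real (Metric.cthickening r K)) 1 with hlt1 | hge
  · have hinc := increment hK hr0 h0 hlt1 (m := prof p * ((c + 3) / 4)) (fun y hy => by
      refine (hδ' ?_).le
      rw [Real.dist_eq, abs_of_nonneg (by linarith [hy.1])]
      linarith [hy.2])
    simp only [zero_add, mul_zero, add_zero, smul_eq_mul] at e1
    rw [cdf_qf hpm, inv_mul_lt_iff₀ hr0] at e1
    rw [← hγ, ← hp] at hinc
    generalize γ.real (Metric.cthickening r K) = q at *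
    have h2 : r * (prof p * ((c + 3) / 4)) ≤ (1 + r) * (q - p) := by
      calc _ ≤ r * ((1 + 1 / r) * (q - p)) := by gcongr
        _ = _ := by field_simp; ring
    have h3 : (1 + r) * (r * prof p * ((c + 1) / 2)) ≤ (1 + r) * (q - p) := by
      refine le_trans ?_ h2
      have : 0 < r * prof p := by positivity
      nlinarith
    have h4 := le_of_mul_le_mul_left h3 (by linarith)
    linarith
  · exact (cdf_lt_one _).le.trans hge

lemma growth_aux {n : ℕ} {K : Set (EuclideanSpace ℝ (Fin n))} (hK : IsCompact K)
    (h0 : 0 < (stdGaussian n).real K) (h1 : (stdGaussian n).real K < 1) {c : ℝ} (hc0 : 0 < c)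
    (hc1 : c < 1) {t : ℝ} (ht : 0 ≤ t) :
    gaussCDF (qf ((stdGaussian n).real K) + c * t) ≤
      (stdGaussian n).real (Metric.cthickening t K) := by
  set γ := stdGaussian n with hγ
  set a := qf (γ.real K) with ha
  let h : ℝ → ℝ := fun u => γ.real (Metric.cthickening u K)
  have hmono : Monotone h := fun u v huv => measureReal_mono (Metric.cthickening_mono huv K)
  let S : Set ℝ := {u | u ∈ Icc 0 t ∧ gaussCDF (a + c * u) ≤ h u}
  have hS0 : (0:ℝ) ∈ S := by
    refine ⟨left_mem_Icc.2 ht, ?_⟩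
    simp only [h, Metric.cthickening_zero, hK.isClosed.closure_eq, mul_zero, add_zero]
    rw [ha, cdf_qf ⟨h0, h1⟩]
  have hbdd : BddAbove S := ⟨t, fun u hu => hu.1.2⟩
  set s := sSup S with hs
  have hs0 : 0 ≤ s := le_csSup hbdd hS0
  have hst : s ≤ t := csSup_le ⟨0, hS0⟩ fun u hu => hu.1.2
  have hsS : gaussCDF (a + c * s) ≤ h s := by
    have : ∀ u ∈ S, gaussCDF (a + c * u) ≤ h s := fun u hu => hu.2.trans (hmono (le_csSup hbdd hu))
    have hcl : IsClosed {u | gaussCDF (a + c * u) ≤ h s} :=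
      isClosed_le (cdf_cont.comp (by fun_prop)) continuous_const
    exact (closure_minimal this hcl) (csSup_mem_closure ⟨0, hS0⟩ hbdd)
  rcases hst.eq_or_lt with heq | hlt
  · rw [← heq]; exact hsS
  · rcases lt_or_ge (h s) 1 with hl | hg
    · exfalso
      have hKs : IsCompact (Metric.cthickening s K) := hK.cthickening
      have hpos : 0 < h s := h0.trans_le (measureReal_mono (Metric.self_subset_cthickening K))
      have hd := dini hKs hpos hl hc0 hc1
      have hsm : ∀ᶠ r in 𝓝[>] (0:ℝ), r < t - s :=
        (nhdsWithin_le_nhds (gt_mem_nhds (show (0:ℝ) < t - s by linarith)))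
      obtain ⟨r, hr1, hr2, hr3⟩ := (hd.and (hsm.and self_mem_nhdsWithin)).exists
      have hr0 : (0:ℝ) < r := hr3
      rw [cthickening_cthickening hr0.le hs0] at hr1
      have hqs : a + c * s ≤ qf (h s) := by
        have := qf_le (cdf_mem (a + c * s)) ⟨hpos, hl⟩ hsS
        rwa [qf_cdf] at this
      have hmem : s + r ∈ S := by
        refine ⟨⟨by linarith, by linarith⟩, ?_⟩
        rw [add_comm s r]
        refine le_trans (cdf_strictMono.monotone ?_) hr1
        change _ ≤ qf (h s) + c * r
        linarith
      linarith [le_csSup hbdd hmem]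
    · exact (cdf_lt_one _).le.trans (hg.trans (hmono hlt.le))

lemma growth {n : ℕ} {K : Set (EuclideanSpace ℝ (Fin n))} (hK : IsCompact K)
    (h0 : 0 < (stdGaussian n).real K) (h1 : (stdGaussian n).real K < 1) {t : ℝ} (ht : 0 ≤ t) :
    gaussCDF (qf ((stdGaussian n).real K) + t) ≤
      (stdGaussian n).real (Metric.cthickening t K) := by
  have hlim : Tendsto (fun c : ℝ => gaussCDF (qf ((stdGaussian n).real K) + c * t)) (𝓝[<] 1)
      (𝓝 (gaussCDF (qf ((stdGaussian n).real K) + 1 * t))) :=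
    Tendsto.mono_left (Continuous.tendsto (cdf_cont.comp (by fun_prop)) 1) nhdsWithin_le_nhds
  rw [one_mul] at hlim
  refine le_of_tendsto hlim ?_
  filter_upwards [Ioo_mem_nhdsLT (show (0:ℝ) < 1 by norm_num)] with c hc
  exact growth_aux hK h0 h1 hc.1 hc.2 ht

end GIso

theorem ehrhard_rearrangement_isoperimetric {n : ℕ} (hn : 0 < n)
    (A : Set (EuclideanSpace ℝ (Fin n))) (hA : MeasurableSet A)
    (ε : ℝ) (hε : 0 < ε) (a : ℝ) (ha : gaussCDF a = (stdGaussian n A).toReal) :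
    stdGaussian n (enlarge {x | x ⟨0, hn⟩ < a} ε) ≤ stdGaussian n (enlarge A ε) := by
  have hup : (stdGaussian n).real (enlarge {x | x ⟨0, hn⟩ < a} ε) ≤ gaussCDF (a + ε) := by
    rw [← GIso.gauss_halfspace n ⟨0, hn⟩ (a + ε)]
    refine measureReal_mono ?_
    rintro x ⟨y, hy, hxy⟩
    have h1 := PiLp.norm_apply_le (x - y) ⟨0, hn⟩
    rw [PiLp.sub_apply, Real.norm_eq_abs] at h1
    have h2 := le_abs_self (x ⟨0, hn⟩ - y ⟨0, hn⟩)
    have hy' : y ⟨0, hn⟩ < a := hy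
    change x ⟨0, hn⟩ < a + ε
    linarith
  have hlow : ∀ δ ∈ Ioo 0 ε, gaussCDF (a - δ + (ε - δ)) ≤ (stdGaussian n).real (enlarge A ε) := by
    intro δ hδ
    have hlt : ENNReal.ofReal (gaussCDF (a - δ)) < stdGaussian n A := by
      rw [ENNReal.ofReal_lt_iff_lt_toReal (GIso.cdf_pos _).le (measure_ne_top _ _), ← ha]
      exact GIso.cdf_strictMono (by linarith [hδ.1])
    obtain ⟨K, hKA, hK, hKlt⟩ := hA.exists_lt_isCompact hlt
    rw [ENNReal.ofReal_lt_iff_lt_toReal (GIso.cdf_pos _).le (measure_ne_top _ _)] at hKlt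
    change _ < (stdGaussian n).real K at hKlt
    have hsub : Metric.cthickening (ε - δ) K ⊆ enlarge A ε := by
      rw [hK.cthickening_eq_biUnion_closedBall (by linarith [hδ.2])]
      intro x hx
      simp only [mem_iUnion, Metric.mem_closedBall, dist_eq_norm] at hx
      obtain ⟨y, hy, hxy⟩ := hx
      exact ⟨y, hKA hy, by linarith [hδ.1]⟩
    refine le_trans ?_ (measureReal_mono hsub)
    have hK0 : 0 < (stdGaussian n).real K := (GIso.cdf_pos _).trans hKlt
    rcases lt_or_ge ((stdGaussian n).real K) 1 with h1 | h1
    · refine le_trans (GIso.cdf_strictMono.monotone ?_)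
        (GIso.growth hK hK0 h1 (by linarith [hδ.2]))
      have := GIso.qf_le (GIso.cdf_mem _) ⟨hK0, h1⟩ hKlt.le
      rw [GIso.qf_cdf] at this
      linarith
    · exact (GIso.cdf_lt_one _).le.trans
        (h1.trans (measureReal_mono (Metric.self_subset_cthickening K)))
  have hlim : Filter.Tendsto (fun δ : ℝ => gaussCDF (a - δ + (ε - δ))) (nhdsWithin 0 (Ioi 0))
      (nhds (gaussCDF (a - 0 + (ε - 0)))) :=
    Filter.Tendsto.mono_left (Continuous.tendsto (GIso.cdf_cont.comp (by fun_prop)) 0)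
      nhdsWithin_le_nhds
  simp only [sub_zero] at hlim
  have hfin := le_of_tendsto hlim (by
    filter_upwards [Ioo_mem_nhdsGT hε] with δ hδ using hlow δ hδ)
  exact (ENNReal.toReal_le_toReal (measure_ne_top _ _) (measure_ne_top _ _)).1 (hup.trans hfin)
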